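/- arXiv:2506.07098 — 2 statements merged into one kernel-verified Lean document; each statement's English description precedes it below -/
import Mathlib

section
/- Let K be a field and B a commutative K-algebra that is finite-dimensional as a K-vector space and generated as a K-algebra by elements x₁, ..., x_n. The following are equivalent: (1) the trace form of B over K is nondegenerate; (2) the minimal polynomial over K of each generator x_i is separable; (3) every element of B is a root of some separable polynomial of K[X]. -/
/-! Both the nondegeneracy of the trace form and the separability of all elements amount to `B`
being unramified over `K`. A nilpotent element lies in the radical of the trace form, so
nondegeneracy forces `B` to be reduced, and so does unramifiedness; a reduced `B` is the product of
its residue fields, and both notions can be checked factor by factor, where they say that the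
residue field is separable over `K`. In a product, a separable common multiple of the minimal
polynomials of the components annihilates an element. Conversely, a derivation kills every root of
a separable polynomial, so separable generators force `Ω[B⁄K] = 0`. -/

open Polynomial

section TraceForm

variable {R S T : Type*} [CommRing R] [CommRing S] [CommRing T] [Algebra R S] [Algebra R T]

theorem traceForm_nondegenerate_iff_forall_trace_mul :
    (Algebra.traceForm R S).Nondegenerate ↔
      ∀ a : S, (∀ b, Algebra.trace R S (a * b) = 0) → a = 0 :=
  (Algebra.traceForm_isSymm R (S := S)).isRefl.nondegenerate_iff_separatingLeft

theorem traceForm_nondegenerate_congr (e : S ≃ₐ[R] T) :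
    (Algebra.traceForm R S).Nondegenerate ↔ (Algebra.traceForm R T).Nondegenerate := by
  simp only [traceForm_nondegenerate_iff_forall_trace_mul, e.surjective.forall, ← map_mul,
    Algebra.trace_eq_of_algEquiv, map_eq_zero_iff e e.injective]

theorem isReduced_of_traceForm_nondegenerate [IsReduced R]
    (h : (Algebra.traceForm R S).Nondegenerate) : IsReduced S where
  eq_zero a ha := traceForm_nondegenerate_iff_forall_trace_mul.mp h a fun b =>
    (Algebra.isNilpotent_trace_of_isNilpotent
      ((Commute.all a b).isNilpotent_mul_right ha)).eq_zero

end TraceForm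

section Pi

variable {R ι : Type*} {A : ι → Type*} [Finite ι] [CommRing R] [∀ i, CommRing (A i)]
  [∀ i, Algebra R (A i)] [∀ i, Module.Free R (A i)] [∀ i, Module.Finite R (A i)]

theorem trace_pi_single [DecidableEq ι] (i : ι) (a : A i) :
    Algebra.trace R (∀ i, A i) (Pi.single i a) = Algebra.trace R (A i) a := by
  let ofCoord : A i →ₗ[R] ∀ i, A i := LinearMap.single R A i
  let mulCoord : (∀ i, A i) →ₗ[R] A i := Algebra.lmul R (A i) a ∘ₗ LinearMap.proj i
  have lmul_single : Algebra.lmul R (∀ i, A i) (Pi.single i a) = ofCoord ∘ₗ mulCoord :=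
    LinearMap.ext fun y => by simp [ofCoord, mulCoord, Pi.single_mul_left]
  have lmul_coord : mulCoord ∘ₗ ofCoord = Algebra.lmul R (A i) a := by
    ext y
    simp [ofCoord, mulCoord]
  rw [Algebra.trace_apply, lmul_single, LinearMap.trace_comp_comm', lmul_coord,
    Algebra.trace_apply]

theorem traceForm_pi_nondegenerate_iff :
    (Algebra.traceForm R (∀ i, A i)).Nondegenerate ↔
      ∀ i, (Algebra.traceForm R (A i)).Nondegenerate := by
  classical
  simp only [traceForm_nondegenerate_iff_forall_trace_mul]
  constructor
  · intro h i a ha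
    refine (Pi.single_eq_zero_iff (i := i)).mp (h _ fun b => ?_)
    rw [← Pi.single_mul_left, trace_pi_single]
    exact ha _
  · intro h x hx
    funext i
    refine h i _ fun b => ?_
    rw [← trace_pi_single, Pi.single_mul_right]
    exact hx _

end Pi

section SeparableMultiple

variable {K : Type*} [Field K]

theorem exists_separable_dvd_and_dvd {f g : K[X]} (hf : f.Separable) (hg : g.Separable) :
    ∃ h : K[X], h.Separable ∧ f ∣ h ∧ g ∣ h := by
  obtain ⟨u, v, d, huv, rfl, rfl⟩ :=
    UniqueFactorizationMonoid.exists_reduced_factors f hf.ne_zero g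
  have hu : IsCoprime (d * v) u := hf.isCoprime.mul_left huv.isCoprime.symm
  exact ⟨d * v * u, hg.mul hf.of_mul_right hu, ⟨v, by ring⟩, dvd_mul_right _ _⟩

theorem exists_separable_forall_dvd {ι : Type*} [Finite ι] {p : ι → K[X]}
    (hp : ∀ i, (p i).Separable) : ∃ f : K[X], f.Separable ∧ ∀ i, p i ∣ f := by
  classical
  have := Fintype.ofFinite ι
  suffices h : ∀ s : Finset ι, ∃ f : K[X], f.Separable ∧ ∀ i ∈ s, p i ∣ f by
    simpa using h Finset.univ
  intro s
  induction s using Finset.induction_on with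
  | empty => exact ⟨1, separable_one, by simp⟩
  | insert i s _ ih =>
    obtain ⟨f, hf, hdvd⟩ := ih
    obtain ⟨g, hg, hig, hfg⟩ := exists_separable_dvd_and_dvd (hp i) hf
    exact ⟨g, hg, (Finset.forall_mem_insert i s (p · ∣ g)).mpr
      ⟨hig, fun j hj => (hdvd j hj).trans hfg⟩⟩

theorem isSeparable_pi {ι : Type*} [Finite ι] {A : ι → Type*} [∀ i, Ring (A i)]
    [∀ i, Algebra K (A i)] {x : ∀ i, A i} (hx : ∀ i, IsSeparable K (x i)) : IsSeparable K x := by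
  obtain ⟨f, hf, hdvd⟩ := exists_separable_forall_dvd hx
  refine Separable.of_dvd hf (minpoly.dvd K x (funext fun i => ?_))
  calc aeval x f i = aeval (x i) f := (aeval_algHom_apply (Pi.evalAlgHom K A i) x f).symm
    _ = 0 := aeval_eq_zero_of_dvd_aeval_eq_zero (hdvd i) (minpoly.aeval K (x i))

end SeparableMultiple

section Unramified

theorem derivation_apply_eq_zero_of_separable {R A M : Type*} [CommSemiring R] [CommSemiring A]
    [Algebra R A] [AddCommMonoid M] [Module A M] [Module R M] (D : Derivation R A M)
    {f : R[X]} (hf : f.Separable) {a : A} (ha : aeval a f = 0) : D a = 0 := by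
  obtain ⟨u, v, huv⟩ := hf
  have hunit : aeval a v * aeval a (derivative f) = 1 := by
    simpa [ha] using congrArg (aeval a) huv
  calc D a = aeval a v • aeval a (derivative f) • D a := by rw [smul_smul, hunit, one_smul]
    _ = aeval a v • D (aeval a f) := by rw [D.map_aeval]
    _ = 0 := by rw [ha, map_zero, smul_zero]

theorem formallyUnramified_of_adjoin_eq_top {R A : Type*} [CommRing R] [CommRing A] [Algebra R A]
    {s : Set A} (hs : Algebra.adjoin R s = ⊤)
    (h : ∀ a ∈ s, ∃ f : R[X], f.Separable ∧ aeval a f = 0) : Algebra.FormallyUnramified R A := by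
  have hD : KaehlerDifferential.D R A = 0 := Derivation.ext_of_adjoin_eq_top s hs fun a ha => by
    obtain ⟨f, hf, hfa⟩ := h a ha
    exact derivation_apply_eq_zero_of_separable _ hf hfa
  have hspan : (⊤ : Submodule A (Ω[A⁄R])) = ⊥ := by
    rw [← KaehlerDifferential.span_range_derivation, hD]
    simp
  exact ⟨(Submodule.subsingleton_iff A).mp (subsingleton_of_top_le_bot hspan.le)⟩

variable {K B : Type*} [Field K] [CommRing B] [Algebra K B]

attribute [local instance] IsArtinianRing.fieldOfSubtypeIsMaximal

theorem traceForm_nondegenerate_iff_formallyUnramified_of_isReduced [FiniteDimensional K B]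
    [IsReduced B] :
    (Algebra.traceForm K B).Nondegenerate ↔ Algebra.FormallyUnramified K B := by
  have : IsArtinianRing B := .of_finite K B
  let e := (IsArtinianRing.equivPi B).restrictScalars K
  rw [traceForm_nondegenerate_congr e, traceForm_pi_nondegenerate_iff,
    Algebra.FormallyUnramified.iff_of_equiv e, Algebra.FormallyUnramified.pi_iff]
  refine forall_congr' fun m => ?_
  rw [Algebra.FormallyUnramified.iff_isSeparable]
  exact ((traceForm_nondegenerate_tfae K (B ⧸ m.asIdeal)).out 0 2).symm

theorem traceForm_nondegenerate_iff_formallyUnramified [FiniteDimensional K B] :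
    (Algebra.traceForm K B).Nondegenerate ↔ Algebra.FormallyUnramified K B := by
  constructor <;> intro h
  · have := isReduced_of_traceForm_nondegenerate h
    exact traceForm_nondegenerate_iff_formallyUnramified_of_isReduced.mp h
  · have := Algebra.FormallyUnramified.isReduced_of_field K B
    exact traceForm_nondegenerate_iff_formallyUnramified_of_isReduced.mpr h

theorem isSeparable_of_formallyUnramified [Algebra.EssFiniteType K B]
    [Algebra.FormallyUnramified K B] : Algebra.IsSeparable K B where
  isSeparable' b := by
    have := Algebra.FormallyUnramified.finite_of_free K B
    have := Algebra.FormallyUnramified.isReduced_of_field K B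
    have : IsArtinianRing B := .of_finite K B
    let e := (IsArtinianRing.equivPi B).restrictScalars K
    have hb : IsSeparable K (e b) := isSeparable_pi fun m =>
      (Algebra.FormallyUnramified.isSeparable K (B ⧸ m.asIdeal)).isSeparable K _
    rwa [IsSeparable, minpoly.algEquiv_eq] at hb

end Unramified

theorem stmt7_general {K B : Type*} [Field K] [CommRing B] [Algebra K B]
    [FiniteDimensional K B] {ι : Type*} (x : ι → B)
    (hx : Algebra.adjoin K (Set.range x) = ⊤) :
    ((Algebra.traceForm K B).Nondegenerate ↔ ∀ i, (minpoly K (x i)).Separable) ∧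
    ((Algebra.traceForm K B).Nondegenerate ↔
      ∀ b : B, ∃ f : Polynomial K, f.Separable ∧ Polynomial.aeval b f = 0) := by
  have hsep (h : (Algebra.traceForm K B).Nondegenerate) (b : B) : (minpoly K b).Separable :=
    have := traceForm_nondegenerate_iff_formallyUnramified.mp h
    isSeparable_of_formallyUnramified.isSeparable K b
  have hnondeg (h : ∀ i, ∃ f : K[X], f.Separable ∧ aeval (x i) f = 0) :
      (Algebra.traceForm K B).Nondegenerate :=
    traceForm_nondegenerate_iff_formallyUnramified.mpr
      (formallyUnramified_of_adjoin_eq_top hx (Set.forall_mem_range.mpr h))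
  exact ⟨⟨fun h i => hsep h (x i), fun h => hnondeg fun i => ⟨_, h i, minpoly.aeval K (x i)⟩⟩,
    fun h b => ⟨_, hsep h b, minpoly.aeval K b⟩, fun h => hnondeg fun i => h (x i)⟩

/-- For a finite-dimensional commutative algebra `B` over a field `K`, generated as a
`K`-algebra by `x 0, ..., x (n-1)`, the following are equivalent: the trace form of `B`
over `K` is nondegenerate; the minimal polynomial of each `x i` is separable; every
element of `B` is a root of some separable polynomial of `K[X]`. -/
theorem stmt7 {K B : Type*} [Field K] [CommRing B] [Algebra K B]
    [FiniteDimensional K B] {n : ℕ} (x : Fin n → B)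
    (hx : Algebra.adjoin K (Set.range x) = ⊤) :
    ((Algebra.traceForm K B).Nondegenerate ↔ ∀ i, (minpoly K (x i)).Separable) ∧
    ((Algebra.traceForm K B).Nondegenerate ↔
      ∀ b : B, ∃ f : Polynomial K, f.Separable ∧ Polynomial.aeval b f = 0) :=
  stmt7_general x hx
end

section
/- Let K be an infinite field and B a commutative K-algebra that is finite-dimensional as a K-vector space with nondegenerate trace form over K. Then B is monogenic: there exists b ∈ B such that B = K[b], and B is K-algebra isomorphic to K[T]/(f) for some separable monic polynomial f ∈ K[T] (namely the minimal polynomial of b). -/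
/-!
Let `L` be an algebraic closure of `K`. Nondegeneracy of the trace form survives the base change to
`L`, and it forces `L ⊗[K] B` to be reduced because nilpotents have trace zero. A reduced finite
`L`-algebra embeds into a product of copies of `L` through its points, so `B` has `finrank K B`
homomorphisms to `L`. As `K` is infinite, some `b : B` lies in none of the proper subspaces on which
two of these agree. Their values at `b` are then `finrank K B` distinct roots of `minpoly K b`,
whose degree is at most `finrank K B`: it is separable, and `K[b] = B` by dimension.
-/

open Polynomial TensorProduct Module

section TraceForm

theorem traceForm_baseChange (R S A : Type*) [CommRing R] [CommRing S] [Algebra R S] [CommRing A]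
    [Algebra R A] [Module.Free R A] [Module.Finite R A] :
    Algebra.traceForm S (S ⊗[R] A) = (Algebra.traceForm R A).baseChange S := by
  have trace_one_tmul (x : A) :
      Algebra.trace S (S ⊗[R] A) (1 ⊗ₜ x) = algebraMap R S (Algebra.trace R A x) := by
    rw [Algebra.trace_apply, Algebra.trace_apply, ← LinearMap.trace_baseChange]
    congr 1
    ext y
    simp
  ext x y
  simp [Algebra.traceForm_apply, trace_one_tmul, Algebra.algebraMap_eq_smul_one]

theorem nondegenerate_baseChange {R V : Type*} (S : Type*) [CommRing R] [IsDomain R] [CommRing S]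
    [IsDomain S] [Algebra R S] [FaithfulSMul R S] [AddCommGroup V] [Module R V] [Module.Free R V]
    [Module.Finite R V] {β : LinearMap.BilinForm R V} (hβ : β.Nondegenerate) :
    (β.baseChange S).Nondegenerate := by
  classical
  let v := Module.Free.chooseBasis R V
  have toMatrix_baseChange : LinearMap.BilinForm.toMatrix (v.baseChange S) (β.baseChange S) =
      (LinearMap.BilinForm.toMatrix v β).map (algebraMap R S) := by
    ext i j
    simp [LinearMap.BilinForm.toMatrix_apply, Algebra.algebraMap_eq_smul_one]
  rw [LinearMap.BilinForm.nondegenerate_iff_det_ne_zero v] at hβ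
  rw [LinearMap.BilinForm.nondegenerate_iff_det_ne_zero (v.baseChange S), toMatrix_baseChange,
    ← RingHom.mapMatrix_apply, ← RingHom.map_det]
  exact (map_ne_zero_iff _ (FaithfulSMul.algebraMap_injective R S)).mpr hβ

theorem isReduced_of_traceForm_nondegenerate_s8 {R A : Type*} [CommRing R] [IsReduced R] [CommRing A]
    [Algebra R A] (h : (Algebra.traceForm R A).Nondegenerate) : IsReduced A := by
  refine ⟨fun x hx ↦ h.1 x fun y ↦ ?_⟩
  have hxy : IsNilpotent (x * y) := (Commute.all x y).isNilpotent_mul_right hx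
  exact (Algebra.isNilpotent_trace_of_isNilpotent hxy).eq_zero

end TraceForm

section Points

theorem exists_algHom_apply_ne_zero (L : Type*) {K A : Type*} [Field K] [Field L] [IsAlgClosed L]
    [Algebra K L] [CommRing A] [Algebra K A] [Algebra.IsIntegral K A] {x : A}
    (hx : ¬IsNilpotent x) : ∃ φ : A →ₐ[K] L, φ x ≠ 0 := by
  obtain ⟨p, hp, hxp⟩ : ∃ p : Ideal A, p.IsPrime ∧ x ∉ p := by
    simpa [nilpotent_iff_mem_prime] using hx
  have : Algebra.IsAlgebraic K (A ⧸ p) := Algebra.IsIntegral.isAlgebraic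
  let ψ : A ⧸ p →ₐ[K] L := IsAlgClosed.lift
  have hψ : Function.Injective ψ :=
    have : IsField (A ⧸ p) := isField_of_isIntegral_of_isField' (Field.toIsField K)
    letI := this.toField
    ψ.toRingHom.injective
  refine ⟨ψ.comp (Ideal.Quotient.mkₐ K p), fun h ↦ hxp ?_⟩
  exact Ideal.Quotient.eq_zero_iff_mem.mp ((map_eq_zero_iff ψ hψ).mp h)

theorem finrank_le_natCard_algHom (L A : Type*) [Field L] [IsAlgClosed L] [CommRing A]
    [Algebra L A] [FiniteDimensional L A] [IsReduced A] :
    finrank L A ≤ Nat.card (A →ₐ[L] L) := by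
  have := Fintype.ofFinite (A →ₐ[L] L)
  let ev : A →ₗ[L] (A →ₐ[L] L) → L := LinearMap.pi AlgHom.toLinearMap
  have hev : Function.Injective ev := by
    refine (injective_iff_map_eq_zero ev).mpr fun x hx ↦ ?_
    by_contra hx0
    obtain ⟨φ, hφ⟩ := exists_algHom_apply_ne_zero (K := L) L (mt IsNilpotent.eq_zero hx0)
    exact hφ (congrFun hx φ)
  simpa [Nat.card_eq_fintype_card] using LinearMap.finrank_le_finrank_of_injective hev

theorem natCard_algHom_eq_finrank (K L B : Type*) [Field K] [Field L] [IsAlgClosed L] [Algebra K L]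
    [CommRing B] [Algebra K B] [FiniteDimensional K B] [IsReduced (L ⊗[K] B)] :
    Nat.card (B →ₐ[K] L) = finrank K B := by
  refine (card_algHom_le_finrank K B L).antisymm ?_
  rw [← finrank_baseChange (R := L),
    Nat.card_congr (Algebra.TensorProduct.liftEquivRight K L B L)]
  exact finrank_le_natCard_algHom L (L ⊗[K] B)

end Points

theorem exists_injective_apply_of_injective {K V W ι : Type*} [Field K] [Infinite K]
    [AddCommGroup V] [Module K V] [AddCommGroup W] [Module K W] [Finite ι] {f : ι → V →ₗ[K] W}
    (hf : Function.Injective f) : ∃ v, Function.Injective fun i ↦ f i v := by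
  obtain ⟨v, hv⟩ := Submodule.exists_forall_notMem_of_forall_ne_top
    (fun p : {p : ι × ι // p.1 ≠ p.2} ↦ LinearMap.eqLocus (f p.1.1) (f p.1.2))
    fun p h ↦ p.2 (hf (LinearMap.eqLocus_eq_top.mp h))
  exact ⟨v, fun i j hij ↦ by_contra fun hne ↦ hv ⟨(i, j), hne⟩ hij⟩

section Minpoly

theorem separable_of_natDegree_le_ncard_rootSet {F L : Type*} [Field F] [Field L] [Algebra F L]
    {p : F[X]} (hp : p ≠ 0) (h : p.natDegree ≤ (p.rootSet L).ncard) : p.Separable := by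
  classical
  have hcard : (p.rootSet L).ncard ≤ (p.aroots L).card := by
    rw [rootSet, Set.ncard_coe_finset]
    exact Multiset.toFinset_card_le _
  have hsplits : (p.map (algebraMap F L)).Splits := by
    refine splits_iff_card_roots.mpr ((card_roots' _).antisymm ?_)
    rw [natDegree_map]
    exact h.trans hcard
  rw [← card_rootSet_eq_natDegree_iff_of_splits hp hsplits, ← Nat.card_eq_fintype_card]
  exact (ncard_rootSet_le p L).antisymm h

theorem natCard_algHom_le_ncard_rootSet_minpoly {K B L : Type*} [Field K] [Ring B] [Algebra K B]
    [CommRing L] [IsDomain L] [Algebra K L] {b : B} (hb : IsIntegral K b)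
    (hinj : Function.Injective fun φ : B →ₐ[K] L ↦ φ b) :
    Nat.card (B →ₐ[K] L) ≤ ((minpoly K b).rootSet L).ncard := by
  have hroot (φ : B →ₐ[K] L) : φ b ∈ (minpoly K b).rootSet L := by
    rw [mem_rootSet_of_ne (minpoly.ne_zero hb), aeval_algHom_apply, minpoly.aeval, map_zero]
  exact Nat.card_le_card_of_injective (fun φ ↦ ⟨φ b, hroot φ⟩)
    fun _ _ h ↦ hinj (congrArg Subtype.val h)

theorem adjoin_singleton_eq_top_of_finrank_le_natDegree_minpoly {K B : Type*} [Field K]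
    [CommRing B] [Algebra K B] [FiniteDimensional K B] {b : B}
    (h : finrank K B ≤ (minpoly K b).natDegree) : Algebra.adjoin K {b} = ⊤ := by
  have hfinrank : finrank K (Algebra.adjoin K {b}) = (minpoly K b).natDegree :=
    (Algebra.adjoin.powerBasis (Algebra.IsIntegral.isIntegral b)).finrank
  rw [← Algebra.toSubmodule_eq_top]
  exact Submodule.eq_top_of_finrank_eq ((Submodule.finrank_le _).antisymm (hfinrank ▸ h))

end Minpoly

/-- Primitive element theorem: a finite-dimensional commutative algebra `B` over an
infinite field `K`, with nondegenerate trace form, is monogenic: `B = K[b]` for some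
`b`, and `B ≃ K[T]/(f)` with `f` the (monic, separable) minimal polynomial of `b`. -/
theorem stmt8 {K B : Type*} [Field K] [Infinite K] [CommRing B] [Algebra K B]
    [FiniteDimensional K B]
    (h : (Algebra.traceForm K B).Nondegenerate) :
    ∃ b : B, Algebra.adjoin K ({b} : Set B) = ⊤ ∧ (minpoly K b).Monic ∧
      (minpoly K b).Separable ∧ Nonempty (B ≃ₐ[K] AdjoinRoot (minpoly K b)) := by
  let L := AlgebraicClosure K
  have : IsReduced (L ⊗[K] B) := isReduced_of_traceForm_nondegenerate_s8 (R := L) <|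
    traceForm_baseChange K L B ▸ nondegenerate_baseChange L h
  obtain ⟨b, hb⟩ := exists_injective_apply_of_injective
    (AlgHom.toLinearMap_injective (R := K) (A := B) (B := L))
  have hint : IsIntegral K b := Algebra.IsIntegral.isIntegral b
  have hroots : finrank K B ≤ ((minpoly K b).rootSet L).ncard :=
    natCard_algHom_eq_finrank K L B ▸ natCard_algHom_le_ncard_rootSet_minpoly hint hb
  have htop : Algebra.adjoin K {b} = ⊤ :=
    adjoin_singleton_eq_top_of_finrank_le_natDegree_minpoly
      (hroots.trans (ncard_rootSet_le _ L))
  have hsep : (minpoly K b).Separable :=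
    separable_of_natDegree_le_ncard_rootSet (minpoly.ne_zero hint)
      ((minpoly.natDegree_le b).trans hroots)
  refine ⟨b, htop, minpoly.monic hint, hsep, ⟨?_⟩⟩
  exact (Subalgebra.topEquiv.symm.trans (Subalgebra.equivOfEq _ _ htop.symm)).trans
    (AlgEquiv.adjoinSingletonEquivAdjoinRootMinpoly K b)
end
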